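/- arXiv:2210.13178 — 2 statements merged into one kernel-verified Lean document; each statement's English description precedes it below -/
import Mathlib

section
/- Fix h ∈ ℝ. Then lim_{n→∞} [ Z_n(1 + h/√n, CW) − Z_n(1, CW) ] = F(h) − F(0), where F(h) := log ∫_ℝ exp(−u⁴/12 + hu²/2) du. -/
open Filter

noncomputable def spin (b : Bool) : ℝ := if b then 1 else -1

noncomputable def mag (n : ℕ) (x : Fin n → Bool) : ℝ := (∑ i, spin (x i)) / n

/-- Log normalizing constant of the Curie–Weiss model. -/
noncomputable def Zcw (n : ℕ) (θ : ℝ) : ℝ :=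
  Real.log (∑ x : Fin n → Bool, Real.exp ((n : ℝ) * θ * mag n x ^ 2 / 2))

/-- `F(h) = log ∫ exp(-u⁴/12 + h u²/2) du`. -/
noncomputable def Fcrit (h : ℝ) : ℝ :=
  Real.log (∫ u : ℝ, Real.exp (-(u ^ 4) / 12 + h * u ^ 2 / 2))

/-!
By the Hubbard–Stratonovich identity, the partition function of the Curie–Weiss model is the
Gaussian average of `(2 cosh (u / n^(1/4)))^n` over `u ~ N(0, θ / √n)`. When `θ = 1 + h / √n`, the
quadratic part of `n log cosh (u / n^(1/4))` cancels the Gaussian weight up to `h u² / (2θ)`, and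
what remains is `-n g(u / n^(1/4))` with `g(x) = x²/2 - log cosh x`. Since `g'' = tanh²` lies
between `x² / (1 + x²)` and `x²`, integrating twice gives `x⁴ / (12 (1 + x²)) ≤ g(x) ≤ x⁴ / 12`:
this pair of bounds yields both the pointwise limit `-u⁴ / 12` of the exponent and a dominating
function.
-/

open MeasureTheory ProbabilityTheory Topology Real
open scoped NNReal

lemma le_of_hasDerivAt_of_second_deriv_nonneg {f f' f'' : ℝ → ℝ} {a : ℝ}
    (hf : ∀ x, HasDerivAt f (f' x) x) (hf' : ∀ x, HasDerivAt f' (f'' x) x)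
    (hf'' : ∀ x, 0 ≤ f'' x) (ha : f' a = 0) (x : ℝ) : f a ≤ f x := by
  have hderiv : deriv f = f' := funext fun y ↦ (hf y).deriv
  have hmono : Monotone f' :=
    monotone_of_deriv_nonneg (fun y ↦ (hf' y).differentiableAt) fun y ↦ (hf' y).deriv ▸ hf'' y
  have hconv : ConvexOn ℝ Set.univ f :=
    Monotone.convexOn_univ_of_deriv (fun y ↦ (hf y).differentiableAt) (hderiv ▸ hmono)
  have hright : derivWithin f (Set.Ioi a) a = 0 :=
    ((hf a).hasDerivWithinAt.derivWithin (uniqueDiffWithinAt_Ioi a)).trans ha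
  exact hconv.isMinOn_of_rightDeriv_eq_zero (by simp) hright (Set.mem_univ x)

lemma hasDerivAt_tanh (x : ℝ) : HasDerivAt tanh (1 - tanh x ^ 2) x := by
  have hcosh := (cosh_pos x).ne'
  have hquot := (hasDerivAt_sinh x).div (hasDerivAt_cosh x) hcosh
  have htanh : tanh = sinh / cosh := funext tanh_eq_sinh_div_cosh
  rw [← htanh] at hquot
  refine hquot.congr_deriv ?_
  rw [tanh_eq_sinh_div_cosh]
  field_simp

lemma hasDerivAt_log_cosh (x : ℝ) : HasDerivAt (fun y ↦ log (cosh y)) (tanh x) x := by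
  rw [tanh_eq_sinh_div_cosh]
  exact (hasDerivAt_cosh x).log (cosh_pos x).ne'

lemma tanh_sq_le_sq (x : ℝ) : tanh x ^ 2 ≤ x ^ 2 := by
  have hderiv_le (y : ℝ) : ‖1 - tanh y ^ 2‖ ≤ 1 := by
    rw [norm_eq_abs, abs_le]
    constructor <;> linarith [tanh_sq_lt_one y, sq_nonneg (tanh y)]
  have hlip := convex_univ.norm_image_sub_le_of_norm_hasDerivWithin_le
    (fun y _ ↦ (hasDerivAt_tanh y).hasDerivWithinAt) (fun y _ ↦ hderiv_le y)
    (Set.mem_univ 0) (Set.mem_univ x)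
  exact sq_le_sq.2 (by simpa using hlip)

lemma sq_div_one_add_sq_le_tanh_sq (x : ℝ) : x ^ 2 / (1 + x ^ 2) ≤ tanh x ^ 2 := by
  have hsinh : x ^ 2 ≤ sinh x ^ 2 := by
    rw [sq_le_sq, abs_sinh]
    exact self_le_sinh_iff.2 (abs_nonneg x)
  rw [tanh_eq_sinh_div_cosh, div_pow, cosh_sq', div_le_div_iff₀ (by positivity) (by positivity)]
  linarith

section LogCoshGap

/-- The amount `x² / 2 - log cosh x` by which `log cosh` falls below its quadratic approximation at
the origin; rescaled, it is the exponent of the limiting integral. -/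
noncomputable def logCoshGap (x : ℝ) : ℝ := x ^ 2 / 2 - log (cosh x)

lemma logCoshGap_zero : logCoshGap 0 = 0 := by simp [logCoshGap]

lemma hasDerivAt_logCoshGap (x : ℝ) : HasDerivAt logCoshGap (x - tanh x) x := by
  have hsq : HasDerivAt (fun y : ℝ ↦ y ^ 2 / 2) x x := by
    simpa using (hasDerivAt_pow 2 x).div_const 2
  exact hsq.sub (hasDerivAt_log_cosh x)

lemma hasDerivAt_id_sub_tanh (x : ℝ) : HasDerivAt (fun y ↦ y - tanh y) (tanh x ^ 2) x :=
  ((hasDerivAt_id x).sub (hasDerivAt_tanh x)).congr_deriv (by ring)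

lemma continuous_logCoshGap : Continuous logCoshGap :=
  continuous_iff_continuousAt.2 fun x ↦ (hasDerivAt_logCoshGap x).continuousAt

lemma logCoshGap_le (x : ℝ) : logCoshGap x ≤ x ^ 4 / 12 := by
  have hf (y : ℝ) : HasDerivAt (fun y ↦ y ^ 4 / 12 - logCoshGap y)
      (y ^ 3 / 3 - (y - tanh y)) y :=
    (((hasDerivAt_pow 4 y).div_const 12).sub (hasDerivAt_logCoshGap y)).congr_deriv
      (by push_cast; ring)
  have hf' (y : ℝ) : HasDerivAt (fun y ↦ y ^ 3 / 3 - (y - tanh y)) (y ^ 2 - tanh y ^ 2) y :=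
    (((hasDerivAt_pow 3 y).div_const 3).sub (hasDerivAt_id_sub_tanh y)).congr_deriv
      (by push_cast; ring)
  have hmin := le_of_hasDerivAt_of_second_deriv_nonneg hf hf'
    (fun y ↦ sub_nonneg.2 (tanh_sq_le_sq y)) (a := 0) (by simp) x
  simpa [logCoshGap_zero] using hmin

lemma le_logCoshGap (x : ℝ) : x ^ 4 / (12 * (1 + x ^ 2)) ≤ logCoshGap x := by
  have hden (y : ℝ) : HasDerivAt (fun y : ℝ ↦ 1 + y ^ 2) (2 * y) y := by
    simpa using (hasDerivAt_pow 2 y).const_add 1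
  have hf (y : ℝ) : HasDerivAt (fun y ↦ logCoshGap y - y ^ 4 / (12 * (1 + y ^ 2)))
      (y - tanh y - (y - y / (1 + y ^ 2) ^ 2) / 6) y :=
    ((hasDerivAt_logCoshGap y).sub ((hasDerivAt_pow 4 y).div ((hden y).const_mul 12)
      (by positivity))).congr_deriv (by push_cast; field_simp; ring)
  have hf' (y : ℝ) : HasDerivAt (fun y ↦ y - tanh y - (y - y / (1 + y ^ 2) ^ 2) / 6)
      (tanh y ^ 2 - (1 - 1 / (1 + y ^ 2) ^ 2 + 4 * y ^ 2 / (1 + y ^ 2) ^ 3) / 6) y :=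
    ((hasDerivAt_id_sub_tanh y).sub (((hasDerivAt_id y).sub
      ((hasDerivAt_id y).div ((hden y).fun_pow 2) (by positivity))).div_const 6)).congr_deriv
      (by push_cast; simp only [id]; field_simp; ring)
  have hf'' (y : ℝ) :
      0 ≤ tanh y ^ 2 - (1 - 1 / (1 + y ^ 2) ^ 2 + 4 * y ^ 2 / (1 + y ^ 2) ^ 3) / 6 := by
    have hdiff : y ^ 2 / (1 + y ^ 2) - (1 - 1 / (1 + y ^ 2) ^ 2 + 4 * y ^ 2 / (1 + y ^ 2) ^ 3) / 6
        = (5 * y ^ 6 + 9 * y ^ 4) / (6 * (1 + y ^ 2) ^ 3) := by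
      field_simp
      ring
    have hnonneg : 0 ≤ (5 * y ^ 6 + 9 * y ^ 4) / (6 * (1 + y ^ 2) ^ 3) := by positivity
    linarith [sq_div_one_add_sq_le_tanh_sq y]
  have hmin := le_of_hasDerivAt_of_second_deriv_nonneg hf hf' hf'' (a := 0) (by simp) x
  simpa [logCoshGap_zero] using hmin

variable {r : ℝ}

lemma pow_four_mul_logCoshGap_div_le (hr : r ≠ 0) (u : ℝ) :
    r ^ 4 * logCoshGap (u / r) ≤ u ^ 4 / 12 := by
  calc r ^ 4 * logCoshGap (u / r) ≤ r ^ 4 * ((u / r) ^ 4 / 12) := by gcongr; exact logCoshGap_le _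
    _ = u ^ 4 / 12 := by field_simp

lemma le_pow_four_mul_logCoshGap_div (hr : r ≠ 0) (u : ℝ) :
    u ^ 4 / (12 * (1 + (u / r) ^ 2)) ≤ r ^ 4 * logCoshGap (u / r) := by
  calc u ^ 4 / (12 * (1 + (u / r) ^ 2)) = r ^ 4 * ((u / r) ^ 4 / (12 * (1 + (u / r) ^ 2))) := by
        field_simp
    _ ≤ r ^ 4 * logCoshGap (u / r) := by gcongr; exact le_logCoshGap _

lemma tendsto_pow_four_mul_logCoshGap_div (u : ℝ) :
    Tendsto (fun r ↦ r ^ 4 * logCoshGap (u / r)) atTop (𝓝 (u ^ 4 / 12)) := by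
  have hden : Tendsto (fun r : ℝ ↦ 12 * (1 + (u / r) ^ 2)) atTop (𝓝 12) := by
    simpa using (((tendsto_id.const_div_atTop u).pow 2).const_add 1).const_mul 12
  have hlower : Tendsto (fun r : ℝ ↦ u ^ 4 / (12 * (1 + (u / r) ^ 2))) atTop (𝓝 (u ^ 4 / 12)) :=
    tendsto_const_nhds.div hden (by norm_num)
  have hr : ∀ᶠ r : ℝ in atTop, r ≠ 0 := eventually_ne_atTop 0
  exact tendsto_of_tendsto_of_tendsto_of_le_of_le' hlower tendsto_const_nhds
    (hr.mono fun r hr ↦ le_pow_four_mul_logCoshGap_div hr u)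
    (hr.mono fun r hr ↦ pow_four_mul_logCoshGap_div_le hr u)

lemma mul_sq_sub_sq_le_pow_four_mul_logCoshGap_div {a : ℝ} (hr : r ≠ 0)
    (har : a ≤ r ^ 2) (u : ℝ) : (a * u ^ 2 - a ^ 2) / 12 ≤ r ^ 4 * logCoshGap (u / r) := by
  refine le_trans ?_ (le_pow_four_mul_logCoshGap_div hr u)
  have hratio : a * (u / r) ^ 2 ≤ u ^ 2 := by
    rw [div_pow, mul_div_assoc', div_le_iff₀ (by positivity), mul_comm]
    gcongr
  rw [div_le_div_iff₀ (by norm_num) (by positivity)]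
  -- `(a u² - a²)(1 + q) ≤ u⁴` for `q = (u / r)²`, because `a q ≤ u²`
  nlinarith [mul_le_mul_of_nonneg_right hratio (sq_nonneg u), sq_nonneg (u ^ 2 - a),
    mul_nonneg (sq_nonneg a) (sq_nonneg (u / r))]

end LogCoshGap

/-- The integral that the Hubbard–Stratonovich transform produces at the critical scaling `r⁴ = n`;
`Fcrit c` is the logarithm of its limit as `r → ∞`. -/
noncomputable def criticalIntegral (r c : ℝ) : ℝ :=
  ∫ u : ℝ, exp (-(r ^ 4 * logCoshGap (u / r)) + c * u ^ 2 / 2)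

lemma exp_neg_add_mul_sq_le {K c u g : ℝ} (hc : c ≤ K)
    (hg : (12 * K * u ^ 2 - (12 * K) ^ 2) / 12 ≤ g) :
    exp (-g + c * u ^ 2 / 2) ≤ exp (-(K / 2) * u ^ 2) * exp (12 * K ^ 2) := by
  rw [← exp_add, exp_le_exp]
  linarith [mul_le_mul_of_nonneg_right hc (sq_nonneg u)]

lemma integrable_exp_neg_mul_sq_mul_exp {K : ℝ} (hK : 0 < K) :
    Integrable fun u : ℝ ↦ exp (-(K / 2) * u ^ 2) * exp (12 * K ^ 2) :=
  (integrable_exp_neg_mul_sq (half_pos hK)).mul_const _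

lemma integrable_exp_neg_pow_four_add_mul_sq (c : ℝ) :
    Integrable fun u : ℝ ↦ exp (-(u ^ 4) / 12 + c * u ^ 2 / 2) := by
  set K := |c| + 1
  have hcK : c ≤ K := (le_abs_self c).trans (lt_add_one _).le
  refine (integrable_exp_neg_mul_sq_mul_exp (show 0 < K by positivity)).mono'
    (by fun_prop) (.of_forall fun u ↦ ?_)
  rw [norm_eq_abs, abs_exp, neg_div]
  exact exp_neg_add_mul_sq_le hcK (by nlinarith [sq_nonneg (u ^ 2 - 12 * K), sq_nonneg (u ^ 2)])

lemma tendsto_criticalIntegral {ι : Type*} {l : Filter ι} [l.IsCountablyGenerated]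
    {r c : ι → ℝ} {c₀ : ℝ} (hr : Tendsto r l atTop) (hc : Tendsto c l (𝓝 c₀)) :
    Tendsto (fun i ↦ criticalIntegral (r i) (c i)) l
      (𝓝 (∫ u : ℝ, exp (-(u ^ 4) / 12 + c₀ * u ^ 2 / 2))) := by
  set K := |c₀| + 1
  have hcK : c₀ < K := (le_abs_self c₀).trans_lt (lt_add_one _)
  refine tendsto_integral_filter_of_dominated_convergence _ (.of_forall fun i ↦ ?_) ?_
    (integrable_exp_neg_mul_sq_mul_exp (show 0 < K by positivity)) (.of_forall fun u ↦ ?_)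
  · have := continuous_logCoshGap
    exact Continuous.aestronglyMeasurable (by fun_prop)
  · filter_upwards [hr.eventually_ne_atTop 0, hc.eventually_le_const hcK,
      ((tendsto_pow_atTop two_ne_zero).comp hr).eventually_ge_atTop (12 * K)] with i hri hci hKi
    refine .of_forall fun u ↦ ?_
    rw [norm_eq_abs, abs_exp]
    exact exp_neg_add_mul_sq_le hci (mul_sq_sub_sq_le_pow_four_mul_logCoshGap_div hri hKi u)
  · rw [neg_div]
    exact (continuous_exp.tendsto _).comp
      (((tendsto_pow_four_mul_logCoshGap_div u).comp hr).neg.add ((hc.mul_const _).div_const 2))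

lemma tendsto_log_criticalIntegral {ι : Type*} {l : Filter ι} [l.IsCountablyGenerated]
    {r c : ι → ℝ} {c₀ : ℝ} (hr : Tendsto r l atTop) (hc : Tendsto c l (𝓝 c₀)) :
    Tendsto (fun i ↦ log (criticalIntegral (r i) (c i))) l (𝓝 (Fcrit c₀)) :=
  (tendsto_criticalIntegral hr hc).log
    (integral_exp_pos (integrable_exp_neg_pow_four_add_mul_sq c₀)).ne'

section HubbardStratonovich

lemma sum_exp_mul_sum_spin (n : ℕ) (t : ℝ) :
    ∑ x : Fin n → Bool, exp (t * ∑ i, spin (x i)) = (2 * cosh t) ^ n := by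
  have hcosh : 2 * cosh t = ∑ b : Bool, exp (t * spin b) := by
    simp only [Fintype.sum_bool, spin, if_true, Bool.false_eq_true, if_false, cosh_eq, mul_one,
      mul_neg]
    ring
  simp only [hcosh, Fintype.sum_pow, Finset.mul_sum, exp_sum]

lemma sum_exp_mul_sq_sum_spin (n : ℕ) (v : ℝ≥0) (a : ℝ) :
    ∑ x : Fin n → Bool, exp (v * (a * ∑ i, spin (x i)) ^ 2 / 2) =
      ∫ u, (2 * cosh (a * u)) ^ n ∂gaussianReal 0 v := by
  have hmgf (t : ℝ) : ∫ u, exp (t * u) ∂gaussianReal 0 v = exp (v * t ^ 2 / 2) := by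
    simpa [mgf] using congrFun (mgf_id_gaussianReal (μ := 0) (v := v)) t
  simp_rw [← hmgf, ← sum_exp_mul_sum_spin]
  rw [← integral_finsetSum _ fun x _ ↦ integrable_exp_mul_gaussianReal _]
  simp only [mul_right_comm]

variable {n : ℕ} {r θ : ℝ}

lemma gaussianPDFReal_mul_two_mul_cosh_pow (hr : 0 < r) (hrn : r ^ 4 = n) (hθ : 0 < θ) {v : ℝ≥0}
    (hv : v = θ / r ^ 2) (u : ℝ) :
    gaussianPDFReal 0 v u * (2 * cosh (r⁻¹ * u)) ^ n =
      2 ^ n * (√(2 * π / r ^ 2 * θ))⁻¹ *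
        exp (-(r ^ 4 * logCoshGap (u / r)) + r ^ 2 * (1 - θ⁻¹) * u ^ 2 / 2) := by
  have hcosh : cosh (r⁻¹ * u) ^ n = exp (r ^ 4 * log (cosh (u / r))) := by
    rw [hrn, exp_nat_mul, exp_log (cosh_pos _), inv_mul_eq_div]
  have hvar : 2 * π * v = 2 * π / r ^ 2 * θ := by
    rw [hv]
    ring
  have hexponent : -(r ^ 4 * logCoshGap (u / r)) + r ^ 2 * (1 - θ⁻¹) * u ^ 2 / 2 =
      -(u - 0) ^ 2 / (2 * v) + r ^ 4 * log (cosh (u / r)) := by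
    rw [logCoshGap, hv]
    field_simp
    ring
  rw [gaussianPDFReal, hvar, hexponent, exp_add, mul_pow, hcosh]
  ring

lemma sum_exp_mag_eq (hr : 0 < r) (hrn : r ^ 4 = n) (hθ : 0 < θ) :
    ∑ x : Fin n → Bool, exp (n * θ * mag n x ^ 2 / 2) =
      2 ^ n * (√(2 * π / r ^ 2 * θ))⁻¹ * criticalIntegral r (r ^ 2 * (1 - θ⁻¹)) := by
  have hvar_pos : 0 < θ / r ^ 2 := by positivity
  obtain ⟨v, hv⟩ : ∃ v : ℝ≥0, v = θ / r ^ 2 := ⟨⟨_, hvar_pos.le⟩, rfl⟩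
  have hv_ne : v ≠ 0 := NNReal.coe_ne_zero.1 (hv ▸ hvar_pos.ne')
  have hexponent (x : Fin n → Bool) :
      n * θ * mag n x ^ 2 / 2 = v * (r⁻¹ * ∑ i, spin (x i)) ^ 2 / 2 := by
    rw [mag, hv, ← hrn]
    field_simp
  simp_rw [hexponent, sum_exp_mul_sq_sum_spin, integral_gaussianReal_eq_integral_smul hv_ne,
    smul_eq_mul, gaussianPDFReal_mul_two_mul_cosh_pow hr hrn hθ hv, integral_const_mul,
    criticalIntegral]

lemma Zcw_eq (hr : 0 < r) (hrn : r ^ 4 = n) (hθ : 0 < θ) :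
    Zcw n θ = n * log 2 - (log (2 * π / r ^ 2) + log θ) / 2 +
      log (criticalIntegral r (r ^ 2 * (1 - θ⁻¹))) := by
  have hsum := sum_exp_mag_eq hr hrn hθ
  have hsum_pos : 0 < ∑ x : Fin n → Bool, exp (n * θ * mag n x ^ 2 / 2) :=
    Finset.sum_pos (fun _ _ ↦ exp_pos _) Finset.univ_nonempty
  have hintegral : criticalIntegral r (r ^ 2 * (1 - θ⁻¹)) ≠ 0 :=
    right_ne_zero_of_mul (hsum ▸ hsum_pos.ne')
  rw [Zcw, hsum, log_mul (by positivity) hintegral, log_mul (by positivity) (by positivity),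
    log_pow, log_inv, log_sqrt (by positivity), log_mul (by positivity) hθ.ne']
  ring

lemma Zcw_sub_Zcw_one (hr : 0 < r) (hrn : r ^ 4 = n) {h : ℝ} (hθ : 0 < 1 + h / r ^ 2) :
    Zcw n (1 + h / r ^ 2) - Zcw n 1 =
      log (criticalIntegral r (h / (1 + h / r ^ 2))) - log (criticalIntegral r 0) -
        log (1 + h / r ^ 2) / 2 := by
  have hcoeff : r ^ 2 * (1 - (1 + h / r ^ 2)⁻¹) = h / (1 + h / r ^ 2) := by
    rw [eq_div_iff hθ.ne', mul_assoc, sub_mul, inv_mul_cancel₀ hθ.ne']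
    field_simp
    ring
  rw [Zcw_eq hr hrn hθ, Zcw_eq hr hrn one_pos, hcoeff, inv_one, sub_self, mul_zero, log_one]
  ring

end HubbardStratonovich

theorem stmt12_general {h : ℕ → ℝ} {h₀ : ℝ} (hh : Tendsto h atTop (𝓝 h₀)) :
    Tendsto (fun n : ℕ ↦ Zcw n (1 + h n / √n) - Zcw n 1) atTop (𝓝 (Fcrit h₀ - Fcrit 0)) := by
  have hsqrt : Tendsto (fun n : ℕ ↦ √(n : ℝ)) atTop atTop :=
    tendsto_sqrt_atTop.comp tendsto_natCast_atTop_atTop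
  have hr : Tendsto (fun n : ℕ ↦ √√(n : ℝ)) atTop atTop := tendsto_sqrt_atTop.comp hsqrt
  have hθ : Tendsto (fun n ↦ 1 + h n / √n) atTop (𝓝 1) := by
    simpa using (hh.div_atTop hsqrt).const_add 1
  have hcoeff : Tendsto (fun n ↦ h n / (1 + h n / √n)) atTop (𝓝 h₀) :=
    div_one h₀ ▸ hh.div hθ one_ne_zero
  have hlog := tendsto_log_criticalIntegral hr hcoeff
  have hlog_zero := tendsto_log_criticalIntegral hr (tendsto_const_nhds (x := (0 : ℝ)))
  have hlim := (hlog.sub hlog_zero).sub ((hθ.log one_ne_zero).div_const 2)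
  rw [log_one, zero_div, sub_zero] at hlim
  refine hlim.congr' ?_
  filter_upwards [hθ.eventually_const_lt one_pos, hr.eventually_gt_atTop 0] with n hθn hrn
  have hsq : √√(n : ℝ) ^ 2 = √n := sq_sqrt (sqrt_nonneg _)
  have hpow : √√(n : ℝ) ^ 4 = n := by
    rw [show 4 = 2 * 2 from rfl, pow_mul, hsq, sq_sqrt n.cast_nonneg]
  simpa only [hsq] using (Zcw_sub_Zcw_one hrn hpow (h := h n) (hsq.symm ▸ hθn)).symm

theorem stmt12 (h : ℝ) :
    Tendsto (fun n : ℕ => Zcw n (1 + h / Real.sqrt (n : ℝ)) - Zcw n 1)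
      atTop (nhds (Fcrit h - Fcrit 0)) :=
  stmt12_general tendsto_const_nhds
end

section
/- Fix θ₀ > 1 and h ∈ ℝ, set θ_n := θ₀ + h/√n, and let X ∈ {−1,1}ⁿ have the Curie–Weiss distribution P_{θ_n,CW}. Then the conditional law of √n·(X̄ − m(θ_n)) given X̄ > 0 converges weakly to the Gaussian distribution N(0, σ²(θ₀)). -/
open MeasureTheory ProbabilityTheory Filter

/-- Unnormalized Curie–Weiss measure on `{-1,1}ⁿ` (encoded by `Fin n → Bool`). -/
noncomputable def cwUnnorm (n : ℕ) (θ : ℝ) : Measure (Fin n → Bool) :=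
  ∑ x : Fin n → Bool,
    ENNReal.ofReal (Real.exp ((n : ℝ) * θ * mag n x ^ 2 / 2)) • Measure.dirac x

/-- The Curie–Weiss model `P_{θ,CW}`. -/
noncomputable def cwMeasure (n : ℕ) (θ : ℝ) : Measure (Fin n → Bool) :=
  (cwUnnorm n θ Set.univ)⁻¹ • cwUnnorm n θ

/-- The Curie–Weiss model conditioned on positive magnetization. -/
noncomputable def cwMeasurePos (n : ℕ) (θ : ℝ) : Measure (Fin n → Bool) :=
  (cwMeasure n θ {x | 0 < mag n x})⁻¹ • (cwMeasure n θ).restrict {x | 0 < mag n x}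

/-!
After adding an independent `N(0, 1 / θ)` variable (the Hubbard–Stratonovich transformation), the
fluctuation of the Curie–Weiss magnetization on the positive phase has an explicit density. Up to an
exponentially small contribution of the negative phase it is proportional to
`exp (-n * (F (m + u / √n) - F m))`, where `F w = θ w ^ 2 / 2 - log (cosh (θ w))` is minimal on the
half line at the spontaneous magnetization `m`. It converges to `exp (-κ u ^ 2 / 2)` with
`κ = F'' m`, and a quadratic lower bound on `F - F m`, uniform in `n`, provides Gaussian domination.
Dividing the limiting characteristic function by that of the smoothing variable leaves a Gaussian of
variance `1 / κ - 1 / θ = (1 - m ^ 2) / (1 - θ (1 - m ^ 2))`.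
-/

open scoped Topology BoundedContinuousFunction

namespace CurieWeiss

section Tanh

lemma hasDerivAt_tanh (x : ℝ) : HasDerivAt Real.tanh (1 - Real.tanh x ^ 2) x := by
  have hquot := (Real.hasDerivAt_sinh x).div (Real.hasDerivAt_cosh x) (Real.cosh_pos x).ne'
  rw [show Real.sinh / Real.cosh = Real.tanh from
    funext fun y => (Real.tanh_eq_sinh_div_cosh y).symm] at hquot
  refine hquot.congr_deriv ?_
  rw [Real.tanh_eq_sinh_div_cosh]
  field [(Real.cosh_pos x).ne']

lemma continuous_tanh : Continuous Real.tanh :=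
  continuous_iff_continuousAt.2 fun x => (hasDerivAt_tanh x).continuousAt

lemma strictMono_tanh : StrictMono Real.tanh :=
  strictMono_of_deriv_pos fun x => by
    rw [(hasDerivAt_tanh x).deriv]
    exact sub_pos.2 (Real.tanh_sq_lt_one x)

lemma strictConcaveOn_tanh : StrictConcaveOn ℝ (Set.Ici 0) Real.tanh := by
  refine StrictAntiOn.strictConcaveOn_of_deriv (convex_Ici 0) continuous_tanh.continuousOn ?_
  intro x hx y _ hxy
  rw [interior_Ici, Set.mem_Ioi] at hx
  rw [(hasDerivAt_tanh x).deriv, (hasDerivAt_tanh y).deriv]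
  have hpos : 0 ≤ Real.tanh x := Real.tanh_zero ▸ strictMono_tanh.monotone hx.le
  gcongr
  exact strictMono_tanh hxy

lemma hasDerivAt_log_cosh (x : ℝ) :
    HasDerivAt (fun y => Real.log (Real.cosh y)) (Real.tanh x) x := by
  simpa only [Real.tanh_eq_sinh_div_cosh] using
    (Real.hasDerivAt_cosh x).log (Real.cosh_pos x).ne'

end Tanh

section MeanValue

lemma exists_sub_eq_deriv_div_deriv_mul_sub {f f' g g' : ℝ → ℝ} (hf : ∀ x, HasDerivAt f (f' x) x)
    (hg : ∀ x, HasDerivAt g (g' x) x) {a b : ℝ} (hab : a ≠ b)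
    (hg' : ∀ x ∈ Set.uIoo a b, g' x ≠ 0) :
    ∃ ξ ∈ Set.uIoo a b, f b - f a = f' ξ / g' ξ * (g b - g a) := by
  wlog hlt : a < b generalizing a b
  · rw [Set.uIoo_comm] at hg' ⊢
    obtain ⟨ξ, hξ, heq⟩ := this hab.symm hg' (hab.symm.lt_of_le (not_lt.1 hlt))
    exact ⟨ξ, hξ, by linear_combination -heq⟩
  rw [Set.uIoo_of_lt hlt] at hg' ⊢
  obtain ⟨ξ, hξ, heq⟩ := exists_ratio_hasDerivAt_eq_ratio_slope f f' hlt
    (HasDerivAt.continuousOn fun x _ => hf x) (fun x _ => hf x) g g'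
    (HasDerivAt.continuousOn fun x _ => hg x) fun x _ => hg x
  refine ⟨ξ, hξ, ?_⟩
  rw [div_mul_eq_mul_div, eq_div_iff (hg' ξ hξ)]
  linear_combination -heq

lemma exists_sub_eq_deriv_div_mul_sq {f f' : ℝ → ℝ} (hf : ∀ x, HasDerivAt f (f' x) x)
    {a x : ℝ} (hax : a ≠ x) :
    ∃ ξ ∈ Set.uIoo a x, f x - f a = f' ξ / (2 * (ξ - a)) * (x - a) ^ 2 := by
  have hsq (y : ℝ) : HasDerivAt (fun y => (y - a) ^ 2) (2 * (y - a)) y := by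
    simpa using ((hasDerivAt_id y).sub_const a).fun_pow 2
  obtain ⟨ξ, hξ, heq⟩ := exists_sub_eq_deriv_div_deriv_mul_sub hf hsq hax fun y hy =>
    mul_ne_zero two_ne_zero (sub_ne_zero.2 fun h => Set.left_notMem_uIoo (h ▸ hy))
  exact ⟨ξ, hξ, by simpa using heq⟩

lemma exists_sub_eq_deriv_deriv_div_two_mul_sq {f f' f'' : ℝ → ℝ} (hf : ∀ x, HasDerivAt f (f' x) x)
    (hf' : ∀ x, HasDerivAt f' (f'' x) x) {a : ℝ} (ha : f' a = 0) (x : ℝ) :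
    ∃ ζ ∈ Set.uIcc a x, f x - f a = f'' ζ / 2 * (x - a) ^ 2 := by
  rcases eq_or_ne a x with rfl | hax
  · exact ⟨a, Set.left_mem_uIcc, by simp⟩
  obtain ⟨ξ, hξ, hf_sub⟩ := exists_sub_eq_deriv_div_mul_sq hf hax
  have hξa : a ≠ ξ := by
    rintro rfl
    exact Set.left_notMem_uIoo hξ
  obtain ⟨ζ, hζ, hf'_sub⟩ := exists_sub_eq_deriv_div_deriv_mul_sub hf' hasDerivAt_id hξa
    fun _ _ => one_ne_zero
  refine ⟨ζ, Set.uIcc_subset_uIcc_left (Set.uIoo_subset_uIcc_self hξ)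
    (Set.uIoo_subset_uIcc_self hζ), ?_⟩
  rw [hf_sub, show f' ξ = f'' ζ * (ξ - a) by simpa [ha] using hf'_sub]
  field [sub_ne_zero.2 hξa.symm]

end MeanValue

section Gaussian

lemma integral_cexp_mul_exp_neg_sq {b : ℝ} (hb : 0 < b) (y t : ℝ) :
    ∫ u : ℝ, Complex.exp (t * u * Complex.I) * (Real.exp (-(b * (u - y) ^ 2 / 2)) : ℂ) =
      √(2 * Real.pi / b) *
        (Complex.exp (-(t ^ 2 / (2 * b))) * Complex.exp (t * y * Complex.I)) := by
  let v : NNReal := ⟨b⁻¹, (inv_pos.2 hb).le⟩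
  have hv : v ≠ 0 := NNReal.coe_ne_zero.1 (inv_pos.2 hb).ne'
  have hcharFun := charFun_gaussianReal (μ := y) (v := v) t
  rw [charFun_apply_real, integral_gaussianReal_eq_integral_smul hv] at hcharFun
  have hsqrt : (√(2 * Real.pi / b) : ℂ) ≠ 0 := by
    norm_cast; positivity
  have hdensity (u : ℝ) : gaussianPDFReal y v u • Complex.exp (t * u * Complex.I) =
      (√(2 * Real.pi / b) : ℂ)⁻¹ *
        (Complex.exp (t * u * Complex.I) * (Real.exp (-(b * (u - y) ^ 2 / 2)) : ℂ)) := by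
    rw [gaussianPDFReal, Complex.real_smul, show (v : ℝ) = b⁻¹ from rfl,
      show -(u - y) ^ 2 / (2 * b⁻¹) = -(b * (u - y) ^ 2 / 2) by field]
    push_cast
    ring_nf
  simp only [hdensity, integral_const_mul] at hcharFun
  rw [inv_mul_eq_iff_eq_mul₀ hsqrt] at hcharFun
  rw [hcharFun, ← Complex.exp_add, show ((v : ℝ) : ℂ) = (b : ℂ)⁻¹ from Complex.ofReal_inv b]
  congr 2
  field

lemma integrable_cexp_mul_exp_neg_sq {b : ℝ} (hb : 0 < b) (y t : ℝ) :
    Integrable fun u : ℝ =>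
      Complex.exp (t * u * Complex.I) * (Real.exp (-(b * (u - y) ^ 2 / 2)) : ℂ) := by
  refine Integrable.of_integral_ne_zero ?_
  rw [integral_cexp_mul_exp_neg_sq hb]
  refine mul_ne_zero ?_ (mul_ne_zero (Complex.exp_ne_zero _) (Complex.exp_ne_zero _))
  norm_cast; positivity

lemma integral_cexp_mul_sum_exp_neg_sq {ι : Type*} (s : Finset ι) (p y : ι → ℝ) {b : ℝ}
    (hb : 0 < b) (t : ℝ) :
    ∫ u : ℝ, Complex.exp (t * u * Complex.I) *
        (∑ i ∈ s, p i * Real.exp (-(b * (u - y i) ^ 2 / 2)) : ℝ) =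
      √(2 * Real.pi / b) * Complex.exp (-(t ^ 2 / (2 * b))) *
        ∑ i ∈ s, p i * Complex.exp (t * y i * Complex.I) := by
  have hexpand (u : ℝ) : Complex.exp (t * u * Complex.I) *
      (∑ i ∈ s, p i * Real.exp (-(b * (u - y i) ^ 2 / 2)) : ℝ) =
      ∑ i ∈ s, p i *
        (Complex.exp (t * u * Complex.I) * (Real.exp (-(b * (u - y i) ^ 2 / 2)) : ℂ)) := by
    rw [Complex.ofReal_sum, Finset.mul_sum]
    exact Finset.sum_congr rfl fun i _ => by rw [Complex.ofReal_mul, mul_left_comm]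
  simp only [hexpand]
  rw [integral_finsetSum _ fun i _ => (integrable_cexp_mul_exp_neg_sq hb (y i) t).const_mul _,
    Finset.mul_sum]
  refine Finset.sum_congr rfl fun i _ => ?_
  rw [integral_const_mul, integral_cexp_mul_exp_neg_sq hb]
  ring

lemma charFun_gaussianReal_inv_sub_inv {a b : ℝ} (ha : 0 < a) (hab : a ≤ b) (t : ℝ) :
    charFun (gaussianReal 0 (a⁻¹ - b⁻¹).toNNReal) t =
      Complex.exp (t ^ 2 / (2 * b)) * Complex.exp (-(t ^ 2 / (2 * a))) := by
  have hvar : 0 ≤ a⁻¹ - b⁻¹ := sub_nonneg.2 (inv_anti₀ ha hab)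
  rw [charFun_gaussianReal, ← Complex.exp_add, Real.coe_toNNReal _ hvar]
  congr 1
  push_cast
  field_simp
  ring

end Gaussian

section Limits

lemma tendsto_add_const_div_sqrt {a : ℕ → ℝ} {a₀ : ℝ} (ha : Tendsto a atTop (𝓝 a₀)) (u : ℝ) :
    Tendsto (fun n : ℕ => a n + u / √n) atTop (𝓝 a₀) := by
  have hsqrt := Real.tendsto_sqrt_atTop.comp (tendsto_natCast_atTop_atTop (R := ℝ))
  simpa using ha.add (hsqrt.const_div_atTop u)

lemma tendsto_integral_of_tendsto_charFun {μ : ℕ → Measure ℝ} {ν : Measure ℝ}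
    [IsProbabilityMeasure ν] (hμ : ∀ᶠ n in atTop, IsProbabilityMeasure (μ n))
    (hchar : ∀ t, Tendsto (fun n => charFun (μ n) t) atTop (𝓝 (charFun ν t))) (f : ℝ →ᵇ ℝ) :
    Tendsto (fun n => ∫ x, f x ∂μ n) atTop (𝓝 (∫ x, f x ∂ν)) := by
  obtain ⟨N, hN⟩ := eventually_atTop.1 hμ
  let P (n : ℕ) : ProbabilityMeasure ℝ := ⟨μ (n + N), hN _ (Nat.le_add_left N n)⟩
  have hP : Tendsto P atTop (𝓝 ⟨ν, inferInstance⟩) :=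
    ProbabilityMeasure.tendsto_iff_tendsto_charFun.2 fun t =>
      (tendsto_add_atTop_iff_nat N).2 (hchar t)
  exact (tendsto_add_atTop_iff_nat N).1
    (ProbabilityMeasure.tendsto_iff_forall_integral_tendsto.1 hP f)

end Limits

/-- `m` is a spontaneous magnetization at inverse temperature `θ`: a positive solution of the
mean-field equation. -/
def IsSpontaneousMag (θ m : ℝ) : Prop := 0 < m ∧ Real.tanh (θ * m) = m

/-- The defect `tanh (θ w) - w` of the mean-field equation. -/
noncomputable def meanFieldGap (θ w : ℝ) : ℝ := Real.tanh (θ * w) - w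

section Gap

variable {θ m w : ℝ}

lemma hasDerivAt_meanFieldGap (θ w : ℝ) :
    HasDerivAt (meanFieldGap θ) (θ * (1 - Real.tanh (θ * w) ^ 2) - 1) w := by
  have hinner : HasDerivAt (fun w => θ * w) θ w := by simpa using (hasDerivAt_id w).const_mul θ
  exact (((hasDerivAt_tanh (θ * w)).comp w hinner).sub (hasDerivAt_id w)).congr_deriv (by ring)

lemma meanFieldGap_zero (θ : ℝ) : meanFieldGap θ 0 = 0 := by simp [meanFieldGap]

lemma strictConcaveOn_meanFieldGap (hθ : 0 < θ) :
    StrictConcaveOn ℝ (Set.Ici 0) (meanFieldGap θ) := by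
  refine ⟨convex_Ici 0, fun x hx y hy hxy a b ha hb hab => ?_⟩
  have htanh := strictConcaveOn_tanh.2 (x := θ * x) (y := θ * y) (mul_nonneg hθ.le hx)
    (mul_nonneg hθ.le hy) (mul_right_injective₀ hθ.ne' |>.ne hxy) ha hb hab
  simp only [smul_eq_mul] at htanh ⊢
  rw [show a * (θ * x) + b * (θ * y) = θ * (a * x + b * y) by ring] at htanh
  simp only [meanFieldGap]
  linarith

namespace IsSpontaneousMag

lemma meanFieldGap_eq_zero (hm : IsSpontaneousMag θ m) : meanFieldGap θ m = 0 :=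
  sub_eq_zero.2 hm.2

lemma theta_pos (hm : IsSpontaneousMag θ m) : 0 < θ := by
  have hpos : Real.tanh 0 < Real.tanh (θ * m) := by
    rw [Real.tanh_zero, hm.2]
    exact hm.1
  exact pos_of_mul_pos_left (strictMono_tanh.lt_iff_lt.1 hpos) hm.1.le

lemma sq_lt_one (hm : IsSpontaneousMag θ m) : m ^ 2 < 1 :=
  hm.2 ▸ Real.tanh_sq_lt_one (θ * m)

lemma meanFieldGap_pos (hm : IsSpontaneousMag θ m) (hw : 0 < w) (hwm : w < m) :
    0 < meanFieldGap θ w := by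
  have hseg : w ∈ openSegment ℝ 0 m := by
    rw [openSegment_eq_Ioo hm.1]
    exact ⟨hw, hwm⟩
  simpa only [meanFieldGap_zero, hm.meanFieldGap_eq_zero, min_self] using
    (strictConcaveOn_meanFieldGap hm.theta_pos).lt_on_openSegment Set.self_mem_Ici
      (Set.mem_Ici.2 hm.1.le) hm.1.ne hseg

lemma meanFieldGap_neg (hm : IsSpontaneousMag θ m) (hmw : m < w) : meanFieldGap θ w < 0 := by
  have hslope := (strictConcaveOn_meanFieldGap hm.theta_pos).slope_anti_adjacent Set.self_mem_Ici
    (Set.mem_Ici.2 (hm.1.trans hmw).le) hm.1 hmw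
  rw [meanFieldGap_zero, hm.meanFieldGap_eq_zero, sub_zero, sub_zero, zero_div] at hslope
  exact neg_of_div_neg_left hslope (sub_pos.2 hmw).le

lemma meanFieldGap_div_sub_le (hm : IsSpontaneousMag θ m) (hw : m / 2 ≤ w) (hne : w ≠ m) :
    meanFieldGap θ w / (w - m) ≤ -(2 * meanFieldGap θ (m / 2) / m) := by
  have hm0 := hm.1
  have hanti := (strictConcaveOn_meanFieldGap hm.theta_pos).concaveOn.slope_anti
    (Set.mem_Ici.2 hm0.le) (a := m / 2) ⟨(half_pos hm0).le, (half_lt_self hm0).ne⟩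
    ⟨(half_pos hm0).le.trans hw, hne⟩ hw
  simp only [slope_def_field, hm.meanFieldGap_eq_zero, sub_zero] at hanti
  refine hanti.trans_eq ?_
  rw [show m / 2 - m = -(m / 2) by ring]
  field

lemma one_sub_theta_mul_pos (hm : IsSpontaneousMag θ m) : 0 < 1 - θ * (1 - m ^ 2) := by
  have hlt := (strictConcaveOn_meanFieldGap hm.theta_pos).lt_slope_of_hasDerivAt Set.self_mem_Ici
    (Set.mem_Ici.2 hm.1.le) hm.1 (hasDerivAt_meanFieldGap θ m)
  rw [slope_def_field, meanFieldGap_zero, hm.meanFieldGap_eq_zero, hm.2, sub_self, zero_div] at hlt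
  linarith

lemma tendsto {ι : Type*} {l : Filter ι} {θ M : ι → ℝ} {θ₀ m₀ : ℝ}
    (h₀ : IsSpontaneousMag θ₀ m₀) (hθ : Tendsto θ l (𝓝 θ₀))
    (hM : ∀ᶠ i in l, IsSpontaneousMag (θ i) (M i)) : Tendsto M l (𝓝 m₀) := by
  have hgap (w : ℝ) : Tendsto (fun i => meanFieldGap (θ i) w) l (𝓝 (meanFieldGap θ₀ w)) :=
    ((continuous_tanh.tendsto _).comp (hθ.mul_const w)).sub_const w
  refine tendsto_order.2 ⟨fun a ha => ?_, fun a ha => ?_⟩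
  · have hpos : 0 < meanFieldGap θ₀ (max a (m₀ / 2)) :=
      h₀.meanFieldGap_pos (lt_max_of_lt_right (half_pos h₀.1)) (max_lt ha (half_lt_self h₀.1))
    filter_upwards [hM, (hgap _).eventually_const_lt hpos] with i hi hgap_pos
    refine (le_max_left a (m₀ / 2)).trans_lt (lt_of_not_ge fun hle => hgap_pos.not_ge ?_)
    rcases hle.eq_or_lt with heq | hlt
    · exact (heq ▸ hi.meanFieldGap_eq_zero).le
    · exact (hi.meanFieldGap_neg hlt).le
  · have hneg := h₀.meanFieldGap_neg ha
    filter_upwards [hM, (hgap _).eventually_lt_const hneg] with i hi hgap_neg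
    refine lt_of_not_ge fun hle => hgap_neg.not_ge ?_
    rcases hle.eq_or_lt with heq | hlt
    · exact (heq ▸ hi.meanFieldGap_eq_zero).ge
    · exact (hi.meanFieldGap_pos (h₀.1.trans ha) hlt).le

end IsSpontaneousMag

end Gap

/-- The mean-field potential, whose critical points are the solutions of the mean-field equation:
`exp (-n * potential θ w)` is, up to a constant, the Hubbard–Stratonovich density of the
Curie–Weiss model. -/
noncomputable def potential (θ w : ℝ) : ℝ := θ * w ^ 2 / 2 - Real.log (Real.cosh (θ * w))

/-- The second derivative of `potential θ`. -/
noncomputable def curvature (θ w : ℝ) : ℝ := θ * (1 - θ * (1 - Real.tanh (θ * w) ^ 2))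

/-- A constant `c` with `c * (w - m) ^ 2 ≤ potential θ w - potential θ m` for `w ≥ m / 2`, read off
the chord of the concave function `meanFieldGap θ` from `m / 2` to `m`. -/
noncomputable def growthRate (θ m : ℝ) : ℝ := θ * meanFieldGap θ (m / 2) / m

/-- A Gaussian decay rate valid for the smoothed Curie–Weiss density on the whole line. -/
noncomputable def decayRate (θ m : ℝ) : ℝ := min (growthRate θ m / 8) (θ / 4)

section Potential

variable {θ m w : ℝ}

lemma hasDerivAt_potential (θ w : ℝ) :
    HasDerivAt (potential θ) (-θ * meanFieldGap θ w) w := by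
  have hinner : HasDerivAt (fun w => θ * w) θ w := by simpa using (hasDerivAt_id w).const_mul θ
  have hquad : HasDerivAt (fun w => θ * w ^ 2 / 2) (θ * w) w :=
    (((hasDerivAt_pow 2 w).const_mul θ).div_const 2).congr_deriv (by push_cast; ring)
  exact (hquad.sub ((hasDerivAt_log_cosh (θ * w)).comp w hinner)).congr_deriv
    (by rw [meanFieldGap]; ring)

lemma hasDerivAt_deriv_potential (θ w : ℝ) :
    HasDerivAt (fun w => -θ * meanFieldGap θ w) (curvature θ w) w :=
  ((hasDerivAt_meanFieldGap θ w).const_mul (-θ)).congr_deriv (by rw [curvature]; ring)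

lemma continuous_curvature : Continuous fun p : ℝ × ℝ => curvature p.1 p.2 := by
  have := continuous_tanh
  unfold curvature
  fun_prop

lemma continuous_potential : Continuous fun p : ℝ × ℝ => potential p.1 p.2 := by
  unfold potential
  fun_prop (disch := exact fun _ => (Real.cosh_pos _).ne')

lemma potential_zero (θ : ℝ) : potential θ 0 = 0 := by simp [potential]

lemma exp_mul_cosh_pow_eq_exp_potential (n : ℕ) (θ w c : ℝ) :
    Real.exp (-(n * (θ * w ^ 2 / 2 - c))) * Real.cosh (θ * w) ^ n =
      Real.exp (-(n * (potential θ w - c))) := by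
  rw [← Real.exp_log (pow_pos (Real.cosh_pos (θ * w)) n), ← Real.exp_add, Real.log_pow, potential]
  ring_nf

namespace IsSpontaneousMag

lemma growthRate_pos (hm : IsSpontaneousMag θ m) : 0 < growthRate θ m :=
  div_pos (mul_pos hm.theta_pos
    (hm.meanFieldGap_pos (half_pos hm.1) (half_lt_self hm.1))) hm.1

lemma decayRate_pos (hm : IsSpontaneousMag θ m) : 0 < decayRate θ m :=
  lt_min (by linarith [hm.growthRate_pos]) (by linarith [hm.theta_pos])

lemma tendsto_decayRate {ι : Type*} {l : Filter ι} {θ M : ι → ℝ} {θ₀ m₀ : ℝ}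
    (h₀ : IsSpontaneousMag θ₀ m₀) (hθ : Tendsto θ l (𝓝 θ₀)) (hM : Tendsto M l (𝓝 m₀)) :
    Tendsto (fun i => decayRate (θ i) (M i)) l (𝓝 (decayRate θ₀ m₀)) := by
  have hhalf := hM.div_const 2
  have hgap : Tendsto (fun i => meanFieldGap (θ i) (M i / 2)) l (𝓝 (meanFieldGap θ₀ (m₀ / 2))) :=
    ((continuous_tanh.tendsto _).comp (hθ.mul hhalf)).sub hhalf
  exact (((hθ.mul hgap).div hM h₀.1.ne').div_const 8).min (hθ.div_const 4)

lemma growthRate_mul_sq_le_potential_sub (hm : IsSpontaneousMag θ m) (hw : m / 2 ≤ w) :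
    growthRate θ m * (w - m) ^ 2 ≤ potential θ w - potential θ m := by
  have hm0 := hm.1
  rcases eq_or_ne m w with rfl | hne
  · simp
  obtain ⟨ξ, hξ, heq⟩ := exists_sub_eq_deriv_div_mul_sq (hasDerivAt_potential θ) hne
  have hξ_half : m / 2 ≤ ξ := (le_min (by linarith) hw).trans hξ.1.le
  have hξ_ne : ξ ≠ m := by
    rintro rfl
    exact Set.left_notMem_uIoo hξ
  have hslope := mul_le_mul_of_nonneg_left (hm.meanFieldGap_div_sub_le hξ_half hξ_ne)
    hm.theta_pos.le
  rw [heq]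
  gcongr
  calc growthRate θ m = -(θ * (-(2 * meanFieldGap θ (m / 2) / m)) / 2) := by
        rw [growthRate]; ring
    _ ≤ -(θ * (meanFieldGap θ ξ / (ξ - m)) / 2) := by gcongr
    _ = -θ * meanFieldGap θ ξ / (2 * (ξ - m)) := by field

lemma antitoneOn_potential (hm : IsSpontaneousMag θ m) :
    AntitoneOn (potential θ) (Set.Icc 0 m) := by
  refine antitoneOn_of_deriv_nonpos (convex_Icc 0 m)
    (HasDerivAt.continuousOn fun w _ => hasDerivAt_potential θ w)
    (fun w _ => (hasDerivAt_potential θ w).differentiableAt.differentiableWithinAt) fun w hw => ?_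
  rw [interior_Icc] at hw
  rw [(hasDerivAt_potential θ w).deriv, neg_mul]
  exact neg_nonpos.2 (mul_pos hm.theta_pos (hm.meanFieldGap_pos hw.1 hw.2)).le

lemma growthRate_div_four_mul_sq_le_potential_sub (hm : IsSpontaneousMag θ m) (hw : 0 ≤ w) :
    growthRate θ m / 4 * (w - m) ^ 2 ≤ potential θ w - potential θ m := by
  have hm0 := hm.1
  have hrate := hm.growthRate_pos
  rcases le_total (m / 2) w with hhalf | hhalf
  · calc growthRate θ m / 4 * (w - m) ^ 2 ≤ growthRate θ m * (w - m) ^ 2 := by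
          gcongr; linarith
      _ ≤ potential θ w - potential θ m := hm.growthRate_mul_sq_le_potential_sub hhalf
  · have hbarrier : potential θ (m / 2) ≤ potential θ w :=
      hm.antitoneOn_potential ⟨hw, by linarith⟩ ⟨by linarith, by linarith⟩ hhalf
    calc growthRate θ m / 4 * (w - m) ^ 2 = growthRate θ m / 4 * (m - w) ^ 2 := by ring
      _ ≤ growthRate θ m / 4 * m ^ 2 := by gcongr <;> linarith
      _ = growthRate θ m * (m / 2 - m) ^ 2 := by ring
      _ ≤ potential θ (m / 2) - potential θ m := hm.growthRate_mul_sq_le_potential_sub le_rfl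
      _ ≤ potential θ w - potential θ m := by gcongr

lemma decayRate_mul_sq_le_potential_sub (hm : IsSpontaneousMag θ m) (hw : 0 ≤ w) :
    decayRate θ m * (w - m) ^ 2 ≤ potential θ w - potential θ m := by
  refine le_trans ?_ (hm.growthRate_div_four_mul_sq_le_potential_sub hw)
  gcongr
  exact (min_le_left _ _).trans (by linarith [hm.growthRate_pos])

lemma decayRate_mul_sq_le_sq_sub_potential (hm : IsSpontaneousMag θ m) (w : ℝ) :
    decayRate θ m * (w - m) ^ 2 ≤ θ * w ^ 2 / 2 - potential θ m := by
  have hzero := hm.growthRate_div_four_mul_sq_le_potential_sub le_rfl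
  rw [potential_zero] at hzero
  have hgrowth : decayRate θ m ≤ growthRate θ m / 8 := min_le_left _ _
  have hquad : decayRate θ m ≤ θ / 4 := min_le_right _ _
  calc decayRate θ m * (w - m) ^ 2
      ≤ decayRate θ m * (2 * w ^ 2 + 2 * m ^ 2) := by
        gcongr
        · exact hm.decayRate_pos.le
        · linarith [sq_nonneg (w + m)]
    _ = decayRate θ m * (2 * w ^ 2) + decayRate θ m * (2 * m ^ 2) := mul_add _ _ _
    _ ≤ θ / 4 * (2 * w ^ 2) + growthRate θ m / 8 * (2 * m ^ 2) := by gcongr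
    _ ≤ θ * w ^ 2 / 2 - potential θ m := by linarith

lemma exists_potential_sub_eq (hm : IsSpontaneousMag θ m) (w : ℝ) :
    ∃ ζ ∈ Set.uIcc m w, potential θ w - potential θ m = curvature θ ζ / 2 * (w - m) ^ 2 :=
  exists_sub_eq_deriv_deriv_div_two_mul_sq (hasDerivAt_potential θ)
    (hasDerivAt_deriv_potential θ) (by rw [hm.meanFieldGap_eq_zero, mul_zero]) w

lemma tendsto_mul_potential_sub {θ M : ℕ → ℝ} {θ₀ m₀ : ℝ} (h₀ : IsSpontaneousMag θ₀ m₀)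
    (hθ : Tendsto θ atTop (𝓝 θ₀)) (hM : ∀ᶠ n in atTop, IsSpontaneousMag (θ n) (M n)) (u : ℝ) :
    Tendsto (fun n : ℕ => n * (potential (θ n) (M n + u / √n) - potential (θ n) (M n))) atTop
      (𝓝 (curvature θ₀ m₀ * u ^ 2 / 2)) := by
  have hM_lim := h₀.tendsto hθ hM
  have hshift := tendsto_add_const_div_sqrt hM_lim u
  obtain ⟨ζ, hζ⟩ := (hM.mono fun n hmag => hmag.exists_potential_sub_eq (M n + u / √n)).choice
  have hζ_lim : Tendsto ζ atTop (𝓝 m₀) := by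
    refine tendsto_of_tendsto_of_tendsto_of_le_of_le' (by simpa using hM_lim.min hshift)
      (by simpa using hM_lim.max hshift) ?_ ?_
    · exact hζ.mono fun n hζn => hζn.1.1
    · exact hζ.mono fun n hζn => hζn.1.2
  have hcurv := (continuous_curvature.tendsto (θ₀, m₀)).comp (hθ.prodMk_nhds hζ_lim)
  refine ((hcurv.mul_const (u ^ 2)).div_const 2).congr' ?_
  filter_upwards [hζ, eventually_gt_atTop 0] with n hζn hn
  rw [hζn.2, add_sub_cancel_left, div_pow, Real.sq_sqrt n.cast_nonneg]
  simp only [Function.comp_apply]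
  field

end IsSpontaneousMag

end Potential

/-- The configurations with positive magnetization. -/
noncomputable def positivePhase (n : ℕ) : Finset (Fin n → Bool) := {x | 0 < mag n x}

/-- The unnormalized Curie–Weiss mass of the configuration `x`. -/
noncomputable def cwWeight (n : ℕ) (θ : ℝ) (x : Fin n → Bool) : ℝ :=
  Real.exp (n * θ * mag n x ^ 2 / 2)

/-- The part of the moment generating function of the total spin under uniform independent signs
that is carried by the positive phase. -/
noncomputable def phaseMGF (n : ℕ) (t : ℝ) : ℝ :=
  (∑ x ∈ positivePhase n, Real.exp (t * (n * mag n x))) / 2 ^ n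

/-- The density at `u`, up to a factor independent of `u`, of `√n * (mag n X - m) + G`, where `X`
is Curie–Weiss distributed on the positive phase and `G` is an independent centered Gaussian of
variance `1 / θ`. The normalization makes it of order one at `u = 0`. -/
noncomputable def smoothedDensity (n : ℕ) (θ m u : ℝ) : ℝ :=
  (∑ x ∈ positivePhase n,
    cwWeight n θ x * Real.exp (-(θ * (u - √n * (mag n x - m)) ^ 2 / 2))) *
      (Real.exp (n * potential θ m) / 2 ^ n)

section PhaseMGF

variable {n : ℕ} {t : ℝ}

lemma natCast_mul_mag (x : Fin n → Bool) : n * mag n x = ∑ i, spin (x i) := by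
  rcases n.eq_zero_or_pos with rfl | hn
  · simp
  · exact mul_div_cancel₀ _ (by positivity)

lemma sum_exp_mul_mag (n : ℕ) (t : ℝ) :
    ∑ x : Fin n → Bool, Real.exp (t * (n * mag n x)) = 2 ^ n * Real.cosh t ^ n := by
  have hsum : ∑ b : Bool, Real.exp (t * spin b) = 2 * Real.cosh t := by
    rw [Fintype.sum_bool, Real.cosh_eq]
    simp only [spin, if_true, Bool.false_eq_true, if_false, mul_one, mul_neg]
    ring
  simp only [natCast_mul_mag, Finset.mul_sum, Real.exp_sum]
  rw [← Fintype.prod_sum fun (_ : Fin n) b => Real.exp (t * spin b)]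
  rw [hsum, Finset.prod_const, Finset.card_univ, Fintype.card_fin, mul_pow]

lemma phaseMGF_le_cosh_pow (n : ℕ) (t : ℝ) : phaseMGF n t ≤ Real.cosh t ^ n := by
  rw [phaseMGF, div_le_iff₀' (by positivity), ← sum_exp_mul_mag]
  exact Finset.sum_le_univ_sum_of_nonneg fun _ => (Real.exp_pos _).le

lemma sum_div_two_pow_le_one (s : Finset (Fin n → Bool)) {g : (Fin n → Bool) → ℝ}
    (hg : ∀ x ∈ s, g x ≤ 1) : (∑ x ∈ s, g x) / 2 ^ n ≤ 1 := by
  rw [div_le_one (by positivity)]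
  calc ∑ x ∈ s, g x ≤ s.card := by simpa using Finset.sum_le_card_nsmul s g 1 hg
    _ ≤ 2 ^ n := by exact_mod_cast by simpa using s.card_le_univ

lemma phaseMGF_le_one (ht : t ≤ 0) : phaseMGF n t ≤ 1 := by
  refine sum_div_two_pow_le_one _ fun x hx => Real.exp_le_one_iff.2 ?_
  have hmag : 0 < mag n x := (Finset.mem_filter.1 hx).2
  exact mul_nonpos_of_nonpos_of_nonneg ht (by positivity)

lemma cosh_pow_sub_one_le_phaseMGF (ht : 0 ≤ t) : Real.cosh t ^ n - 1 ≤ phaseMGF n t := by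
  have hneg : (∑ x with ¬0 < mag n x, Real.exp (t * (n * mag n x))) / 2 ^ n ≤ 1 := by
    refine sum_div_two_pow_le_one _ fun x hx => Real.exp_le_one_iff.2 ?_
    have hmag : mag n x ≤ 0 := not_lt.1 (Finset.mem_filter.1 hx).2
    exact mul_nonpos_of_nonneg_of_nonpos ht
      (mul_nonpos_of_nonneg_of_nonpos n.cast_nonneg hmag)
  have hsplit := Finset.sum_filter_add_sum_filter_not Finset.univ (fun x => 0 < mag n x)
    fun x => Real.exp (t * (n * mag n x))
  rw [sum_exp_mul_mag, ← div_left_inj' (show (2 : ℝ) ^ n ≠ 0 by positivity), add_div,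
    mul_div_cancel_left₀ _ (by positivity)] at hsplit
  rw [phaseMGF, positivePhase]
  linarith

end PhaseMGF

section SmoothedDensity

variable {n : ℕ} {θ m u : ℝ}

lemma smoothedDensity_nonneg (n : ℕ) (θ m u : ℝ) : 0 ≤ smoothedDensity n θ m u :=
  mul_nonneg (Finset.sum_nonneg fun _ _ => mul_nonneg (Real.exp_pos _).le (Real.exp_pos _).le)
    (by positivity)

lemma continuous_smoothedDensity (n : ℕ) (θ m : ℝ) : Continuous (smoothedDensity n θ m) := by
  unfold smoothedDensity
  fun_prop

-- Completing the square turns the Gaussian smoothing of the weight into a linear tilt.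
lemma smoothedDensity_eq (hn : 0 < n) (θ m u : ℝ) :
    smoothedDensity n θ m u =
      Real.exp (-(n * (θ * (m + u / √n) ^ 2 / 2 - potential θ m))) *
        phaseMGF n (θ * (m + u / √n)) := by
  have hsqrt : √(n : ℝ) ≠ 0 := by positivity
  have hsq : √(n : ℝ) ^ 2 = n := Real.sq_sqrt n.cast_nonneg
  rw [smoothedDensity, phaseMGF, mul_div_assoc', mul_div_assoc', Finset.sum_mul, Finset.mul_sum]
  congr 1
  refine Finset.sum_congr rfl fun x _ => ?_
  rw [cwWeight, ← Real.exp_add, ← Real.exp_add, ← Real.exp_add]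
  congr 1
  generalize √(n : ℝ) = s at hsqrt hsq ⊢
  rw [← hsq]
  field_simp
  ring

lemma smoothedDensity_le_exp_potential (hn : 0 < n) (θ m u : ℝ) :
    smoothedDensity n θ m u ≤
      Real.exp (-(n * (potential θ (m + u / √n) - potential θ m))) := by
  rw [smoothedDensity_eq hn, ← exp_mul_cosh_pow_eq_exp_potential]
  gcongr
  exact phaseMGF_le_cosh_pow _ _

lemma exp_potential_sub_exp_le_smoothedDensity (hn : 0 < n) (hθ : 0 ≤ θ) (hu : 0 ≤ m + u / √n) :
    Real.exp (-(n * (potential θ (m + u / √n) - potential θ m))) -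
        Real.exp (-(n * (θ * (m + u / √n) ^ 2 / 2 - potential θ m))) ≤
      smoothedDensity n θ m u := by
  rw [smoothedDensity_eq hn, ← exp_mul_cosh_pow_eq_exp_potential, ← mul_sub_one]
  gcongr
  exact cosh_pow_sub_one_le_phaseMGF (mul_nonneg hθ hu)

namespace IsSpontaneousMag

lemma smoothedDensity_le_exp_neg_mul_sq (hm : IsSpontaneousMag θ m) (hn : 0 < n) (u : ℝ) :
    smoothedDensity n θ m u ≤ Real.exp (-decayRate θ m * u ^ 2) := by
  have hscale : -decayRate θ m * u ^ 2 = -(n * (decayRate θ m * (m + u / √n - m) ^ 2)) := by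
    rw [add_sub_cancel_left, div_pow, Real.sq_sqrt n.cast_nonneg]
    field
  rw [hscale]
  rcases le_total 0 (m + u / √n) with hw | hw
  · refine (smoothedDensity_le_exp_potential hn θ m u).trans ?_
    gcongr
    exact hm.decayRate_mul_sq_le_potential_sub hw
  · calc smoothedDensity n θ m u
        ≤ Real.exp (-(n * (θ * (m + u / √n) ^ 2 / 2 - potential θ m))) := by
          rw [smoothedDensity_eq hn]
          exact mul_le_of_le_one_right (Real.exp_pos _).le
            (phaseMGF_le_one (mul_nonpos_of_nonneg_of_nonpos hm.theta_pos.le hw))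
      _ ≤ Real.exp (-(n * (decayRate θ m * (m + u / √n - m) ^ 2))) := by
          gcongr
          exact hm.decayRate_mul_sq_le_sq_sub_potential _

section Limit

variable {θ M : ℕ → ℝ} {θ₀ m₀ : ℝ}

lemma tendsto_exp_sq_sub_potential (h₀ : IsSpontaneousMag θ₀ m₀) (hθ : Tendsto θ atTop (𝓝 θ₀))
    (hM : Tendsto M atTop (𝓝 m₀)) (u : ℝ) :
    Tendsto (fun n : ℕ =>
      Real.exp (-(n * (θ n * (M n + u / √n) ^ 2 / 2 - potential (θ n) (M n))))) atTop (𝓝 0) := by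
  have hshift := tendsto_add_const_div_sqrt hM u
  have hexponent : Tendsto (fun n : ℕ => θ n * (M n + u / √n) ^ 2 / 2 - potential (θ n) (M n))
      atTop (𝓝 (θ₀ * m₀ ^ 2 / 2 - potential θ₀ m₀)) :=
    ((hθ.mul (hshift.pow 2)).div_const 2).sub
      ((continuous_potential.tendsto (θ₀, m₀)).comp (hθ.prodMk_nhds hM))
  have hpos : 0 < θ₀ * m₀ ^ 2 / 2 - potential θ₀ m₀ := by
    rw [potential, sub_sub_cancel]
    exact Real.log_pos (Real.one_lt_cosh.2 (mul_pos h₀.theta_pos h₀.1).ne')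
  exact Real.tendsto_exp_neg_atTop_nhds_zero.comp
    (tendsto_natCast_atTop_atTop.atTop_mul_pos hpos hexponent)

lemma tendsto_smoothedDensity (h₀ : IsSpontaneousMag θ₀ m₀) (hθ : Tendsto θ atTop (𝓝 θ₀))
    (hM : ∀ᶠ n in atTop, IsSpontaneousMag (θ n) (M n)) (u : ℝ) :
    Tendsto (fun n => smoothedDensity n (θ n) (M n) u) atTop
      (𝓝 (Real.exp (-(curvature θ₀ m₀ * u ^ 2 / 2)))) := by
  have hM_lim := h₀.tendsto hθ hM
  have hmain : Tendsto
      (fun n : ℕ => Real.exp (-(n * (potential (θ n) (M n + u / √n) - potential (θ n) (M n)))))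
      atTop (𝓝 (Real.exp (-(curvature θ₀ m₀ * u ^ 2 / 2)))) :=
    (Real.continuous_exp.tendsto _).comp (h₀.tendsto_mul_potential_sub hθ hM u).neg
  have hlower := hmain.sub (h₀.tendsto_exp_sq_sub_potential hθ hM_lim u)
  rw [sub_zero] at hlower
  have hshift := tendsto_add_const_div_sqrt hM_lim u
  refine tendsto_of_tendsto_of_tendsto_of_le_of_le' hlower hmain ?_ ?_
  · filter_upwards [hM, eventually_gt_atTop 0, hshift.eventually_const_lt h₀.1] with n hmag hn hw
    exact exp_potential_sub_exp_le_smoothedDensity hn hmag.theta_pos.le hw.le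
  · filter_upwards [eventually_gt_atTop 0] with n hn
    exact smoothedDensity_le_exp_potential hn _ _ _

end Limit

end IsSpontaneousMag

end SmoothedDensity

section Measure

variable {n : ℕ}

instance (n : ℕ) (θ : ℝ) : IsFiniteMeasure (cwUnnorm n θ) :=
  ⟨by simp [cwUnnorm, ENNReal.sum_lt_top]⟩

lemma cwUnnorm_real_singleton (n : ℕ) (θ : ℝ) (x : Fin n → Bool) :
    (cwUnnorm n θ).real {x} = cwWeight n θ x := by
  have hdirac (y : Fin n → Bool) : Measure.dirac y {x} = if y = x then 1 else 0 := by
    simp [Set.indicator_apply]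
  simp [cwUnnorm, Measure.real, Measure.finsetSum_apply, hdirac, cwWeight, (Real.exp_pos _).le]

lemma positivePhase_nonempty (hn : 0 < n) : (positivePhase n).Nonempty :=
  ⟨fun _ => true, Finset.mem_filter.2 ⟨Finset.mem_univ _, by
    simp only [mag, spin, if_true, Finset.sum_const, Finset.card_univ, Fintype.card_fin]
    positivity⟩⟩

lemma sum_cwWeight_pos (hn : 0 < n) (θ : ℝ) : 0 < ∑ x ∈ positivePhase n, cwWeight n θ x :=
  Finset.sum_pos (fun _ _ => Real.exp_pos _) (positivePhase_nonempty hn)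

lemma coe_positivePhase (n : ℕ) : (positivePhase n : Set (Fin n → Bool)) = {x | 0 < mag n x} := by
  simp [positivePhase]

lemma cwUnnorm_real_positivePhase (n : ℕ) (θ : ℝ) :
    (cwUnnorm n θ).real (positivePhase n) = ∑ x ∈ positivePhase n, cwWeight n θ x := by
  rw [← sum_measureReal_singleton]
  exact Finset.sum_congr rfl fun x _ => cwUnnorm_real_singleton n θ x

lemma cwMeasurePos_eq_cond (n : ℕ) (θ : ℝ) :
    cwMeasurePos n θ = (cwUnnorm n θ)[|positivePhase n] := by
  have hcond := cond_cond_eq_cond_inter MeasurableSet.univ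
    (positivePhase n).measurableSet (cwUnnorm n θ)
  rw [Set.univ_inter] at hcond
  rw [← hcond, coe_positivePhase, cwMeasurePos, cwMeasure, ProbabilityTheory.cond,
    ProbabilityTheory.cond, Measure.restrict_univ]

lemma isProbabilityMeasure_cwMeasurePos (hn : 0 < n) (θ : ℝ) :
    IsProbabilityMeasure (cwMeasurePos n θ) := by
  rw [cwMeasurePos_eq_cond]
  refine cond_isProbabilityMeasure fun hzero => (sum_cwWeight_pos hn θ).ne' ?_
  rw [← cwUnnorm_real_positivePhase, Measure.real, hzero, ENNReal.toReal_zero]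

lemma integral_cwMeasurePos {E : Type*} [NormedAddCommGroup E] [NormedSpace ℝ E] [CompleteSpace E]
    (n : ℕ) (θ : ℝ) (g : (Fin n → Bool) → E) :
    ∫ x, g x ∂cwMeasurePos n θ =
      (∑ x ∈ positivePhase n, cwWeight n θ x)⁻¹ • ∑ x ∈ positivePhase n, cwWeight n θ x • g x := by
  rw [cwMeasurePos_eq_cond, ProbabilityTheory.cond, integral_smul_measure, ENNReal.toReal_inv,
    ← cwUnnorm_real_positivePhase, setIntegral_finset _ Integrable.of_finite.integrableOn]
  simp only [cwUnnorm_real_singleton]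
  rfl

end Measure

/-- The Fourier transform of the smoothed density. -/
noncomputable def smoothedFourier (n : ℕ) (θ m t : ℝ) : ℂ :=
  ∫ u : ℝ, Complex.exp (t * u * Complex.I) * (smoothedDensity n θ m u : ℂ)

/-- The law of `√n * (mag n X - m)` for `X` Curie–Weiss distributed conditionally on positive
magnetization. -/
noncomputable def fluctuationLaw (n : ℕ) (θ m : ℝ) : Measure ℝ :=
  (cwMeasurePos n θ).map fun x => √n * (mag n x - m)

section FluctuationLaw

variable {n : ℕ} {θ : ℝ}

lemma smoothedFourier_eq (n : ℕ) (hθ : 0 < θ) (m t : ℝ) :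
    smoothedFourier n θ m t =
      (Real.exp (n * potential θ m) / 2 ^ n : ℝ) * √(2 * Real.pi / θ) *
        Complex.exp (-(t ^ 2 / (2 * θ))) *
          ∑ x ∈ positivePhase n,
            cwWeight n θ x * Complex.exp (t * (√n * (mag n x - m) : ℝ) * Complex.I) := by
  simp only [smoothedFourier, smoothedDensity, Complex.ofReal_mul _ (Real.exp _ / _), ← mul_assoc]
  rw [integral_mul_const, integral_cexp_mul_sum_exp_neg_sq _ _ _ hθ]
  ring

lemma isProbabilityMeasure_fluctuationLaw (hn : 0 < n) (θ m : ℝ) :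
    IsProbabilityMeasure (fluctuationLaw n θ m) := by
  have := isProbabilityMeasure_cwMeasurePos hn θ
  exact Measure.isProbabilityMeasure_map (measurable_of_finite _).aemeasurable

lemma integral_fluctuationLaw {E : Type*} [NormedAddCommGroup E] [NormedSpace ℝ E] (n : ℕ)
    (θ m : ℝ) {g : ℝ → E} (hg : StronglyMeasurable g) :
    ∫ y, g y ∂fluctuationLaw n θ m = ∫ x, g (√n * (mag n x - m)) ∂cwMeasurePos n θ :=
  integral_map (measurable_of_finite _).aemeasurable hg.aestronglyMeasurable

-- Undoing the smoothing divides by the characteristic function of the Gaussian summand.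
lemma charFun_fluctuationLaw (hn : 0 < n) (hθ : 0 < θ) (m t : ℝ) :
    charFun (fluctuationLaw n θ m) t =
      Complex.exp (t ^ 2 / (2 * θ)) * (smoothedFourier n θ m t / smoothedFourier n θ m 0) := by
  have hmass : (∑ x ∈ positivePhase n, cwWeight n θ x : ℂ) ≠ 0 := by
    exact_mod_cast (sum_cwWeight_pos hn θ).ne'
  have hsqrt : (√(2 * Real.pi / θ) : ℂ) ≠ 0 := by norm_cast; positivity
  have hnorm : ((Real.exp (n * potential θ m) / 2 ^ n : ℝ) : ℂ) ≠ 0 := by norm_cast; positivity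
  rw [charFun_apply_real, integral_fluctuationLaw n θ m (by fun_prop), integral_cwMeasurePos,
    smoothedFourier_eq n hθ, smoothedFourier_eq n hθ, Complex.exp_neg]
  simp only [Complex.real_smul, Complex.ofReal_zero, zero_mul, zero_div, neg_zero, ne_eq,
    OfNat.ofNat_ne_zero, not_false_eq_true, zero_pow, Complex.exp_zero, mul_one,
    Complex.ofReal_inv, Complex.ofReal_sum]
  field [Complex.exp_ne_zero (t ^ 2 / (2 * θ))]

end FluctuationLaw

namespace IsSpontaneousMag

lemma curvature_eq {θ m : ℝ} (hm : IsSpontaneousMag θ m) :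
    curvature θ m = θ * (1 - θ * (1 - m ^ 2)) := by
  rw [curvature, hm.2]

lemma curvature_pos {θ m : ℝ} (hm : IsSpontaneousMag θ m) : 0 < curvature θ m := by
  rw [hm.curvature_eq]
  exact mul_pos hm.theta_pos hm.one_sub_theta_mul_pos

lemma curvature_le {θ m : ℝ} (hm : IsSpontaneousMag θ m) : curvature θ m ≤ θ := by
  rw [hm.curvature_eq]
  exact mul_le_of_le_one_right hm.theta_pos.le
    (sub_le_self _ (mul_nonneg hm.theta_pos.le (sub_nonneg.2 hm.sq_lt_one.le)))

lemma inv_curvature_sub_inv {θ m : ℝ} (hm : IsSpontaneousMag θ m) :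
    (curvature θ m)⁻¹ - θ⁻¹ = (1 - m ^ 2) / (1 - θ * (1 - m ^ 2)) := by
  rw [hm.curvature_eq]
  field [hm.theta_pos.ne', hm.one_sub_theta_mul_pos.ne']

section Limit

variable {θ M : ℕ → ℝ} {θ₀ m₀ : ℝ}

lemma tendsto_smoothedFourier (h₀ : IsSpontaneousMag θ₀ m₀) (hθ : Tendsto θ atTop (𝓝 θ₀))
    (hM : ∀ᶠ n in atTop, IsSpontaneousMag (θ n) (M n)) (t : ℝ) :
    Tendsto (fun n => smoothedFourier n (θ n) (M n) t) atTop
      (𝓝 (√(2 * Real.pi / curvature θ₀ m₀) *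
        Complex.exp (-(t ^ 2 / (2 * curvature θ₀ m₀))))) := by
  have hdecay := h₀.tendsto_decayRate hθ (h₀.tendsto hθ hM)
  have hhalf : decayRate θ₀ m₀ / 2 < decayRate θ₀ m₀ := half_lt_self h₀.decayRate_pos
  have hlim := integral_cexp_mul_exp_neg_sq h₀.curvature_pos 0 t
  simp only [sub_zero, Complex.ofReal_zero, mul_zero, zero_mul, Complex.exp_zero, mul_one] at hlim
  rw [← hlim]
  refine tendsto_integral_filter_of_dominated_convergence
    (fun u => Real.exp (-(decayRate θ₀ m₀ / 2) * u ^ 2)) ?_ ?_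
    (integrable_exp_neg_mul_sq (half_pos h₀.decayRate_pos)) ?_
  · refine .of_forall fun n => Continuous.aestronglyMeasurable ?_
    have := continuous_smoothedDensity n (θ n) (M n)
    fun_prop
  · filter_upwards [hM, eventually_gt_atTop 0, hdecay.eventually_const_lt hhalf]
      with n hmag hn hrate
    refine .of_forall fun u => ?_
    rw [norm_mul, ← Complex.ofReal_mul, Complex.norm_exp_ofReal_mul_I, one_mul, Complex.norm_real,
      Real.norm_of_nonneg (smoothedDensity_nonneg _ _ _ _)]
    refine (hmag.smoothedDensity_le_exp_neg_mul_sq hn u).trans ?_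
    gcongr
  · exact .of_forall fun u => ((Complex.continuous_ofReal.tendsto _).comp
      (h₀.tendsto_smoothedDensity hθ hM u)).const_mul _

lemma tendsto_charFun_fluctuationLaw (h₀ : IsSpontaneousMag θ₀ m₀)
    (hθ : Tendsto θ atTop (𝓝 θ₀)) (hM : ∀ᶠ n in atTop, IsSpontaneousMag (θ n) (M n)) (t : ℝ) :
    Tendsto (fun n => charFun (fluctuationLaw n (θ n) (M n)) t) atTop
      (𝓝 (charFun (gaussianReal 0 ((1 - m₀ ^ 2) / (1 - θ₀ * (1 - m₀ ^ 2))).toNNReal) t)) := by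
  have hsqrt : (√(2 * Real.pi / curvature θ₀ m₀) : ℂ) ≠ 0 := by
    have := h₀.curvature_pos
    norm_cast; positivity
  have hden := h₀.tendsto_smoothedFourier hθ hM 0
  simp only [Complex.ofReal_zero, ne_eq, OfNat.ofNat_ne_zero, not_false_eq_true, zero_pow, zero_div,
    neg_zero, Complex.exp_zero, mul_one] at hden
  have hratio := (h₀.tendsto_smoothedFourier hθ hM t).div hden hsqrt
  rw [mul_div_cancel_left₀ _ hsqrt] at hratio
  have hdeconv : Tendsto (fun n => Complex.exp (t ^ 2 / (2 * θ n))) atTop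
      (𝓝 (Complex.exp (t ^ 2 / (2 * θ₀)))) := by
    have hcont : ContinuousAt (fun z : ℝ => Complex.exp (t ^ 2 / (2 * z))) θ₀ := by
      have : (2 * θ₀ : ℂ) ≠ 0 := by exact_mod_cast (mul_pos two_pos h₀.theta_pos).ne'
      fun_prop (disch := assumption)
    exact hcont.tendsto.comp hθ
  rw [← h₀.inv_curvature_sub_inv,
    charFun_gaussianReal_inv_sub_inv h₀.curvature_pos h₀.curvature_le]
  refine (hdeconv.mul hratio).congr' ?_
  filter_upwards [hM, eventually_gt_atTop 0] with n hmag hn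
  exact (charFun_fluctuationLaw hn hmag.theta_pos _ t).symm

end Limit

end IsSpontaneousMag

end CurieWeiss

open CurieWeiss in
theorem stmt13_general {θ M : ℕ → ℝ} {θ₀ m₀ : ℝ} (h₀ : IsSpontaneousMag θ₀ m₀)
    (hθ : Tendsto θ atTop (𝓝 θ₀)) (hM : ∀ᶠ n in atTop, IsSpontaneousMag (θ n) (M n))
    (f : ℝ →ᵇ ℝ) :
    Tendsto (fun n : ℕ => ∫ x, f (√n * (mag n x - M n)) ∂cwMeasurePos n (θ n)) atTop
      (𝓝 (∫ y, f y ∂gaussianReal 0 ((1 - m₀ ^ 2) / (1 - θ₀ * (1 - m₀ ^ 2))).toNNReal)) := by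
  have hprob : ∀ᶠ n in atTop, IsProbabilityMeasure (fluctuationLaw n (θ n) (M n)) :=
    (eventually_gt_atTop 0).mono fun n hn => isProbabilityMeasure_fluctuationLaw hn _ _
  simpa only [integral_fluctuationLaw _ _ _ f.continuous.stronglyMeasurable] using
    tendsto_integral_of_tendsto_charFun hprob (h₀.tendsto_charFun_fluctuationLaw hθ hM) f

theorem stmt13 (θ₀ h : ℝ) (hθ : 1 < θ₀) (m : ℝ → ℝ)
    (hm : ∀ θ : ℝ, 1 < θ → 0 < m θ ∧ Real.tanh (θ * m θ) = m θ) :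
    ∀ f : BoundedContinuousFunction ℝ ℝ,
      Tendsto (fun n : ℕ =>
          ∫ x, f (Real.sqrt (n : ℝ) * (mag n x - m (θ₀ + h / Real.sqrt (n : ℝ)))) ∂
            cwMeasurePos n (θ₀ + h / Real.sqrt (n : ℝ)))
        atTop
        (nhds (∫ y, f y ∂ gaussianReal 0
          (Real.toNNReal ((1 - m θ₀ ^ 2) / (1 - θ₀ * (1 - m θ₀ ^ 2)))))) := by
  have hθ_lim : Tendsto (fun n : ℕ => θ₀ + h / √n) atTop (nhds θ₀) :=
    CurieWeiss.tendsto_add_const_div_sqrt tendsto_const_nhds h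
  exact stmt13_general (hm θ₀ hθ) hθ_lim
    ((hθ_lim.eventually_const_lt hθ).mono fun n hn => hm _ hn)
end
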